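/- Let I ⊂ R and J ⊂ T be nonzero proper graded ideals, identified with their extensions to S = R ⊗_K T. Then for every integer k ≥ 1: (a) for every p ∈ Ass(I^k), v_p((IJ)^k) = v_p(I^k) + α(J)·k; and (b) for every q ∈ Ass(J^k), v_q((IJ)^k) = v_q(J^k) + α(I)·k, where all associated primes and v-numbers are computed over S. -/

import Mathlib

open MvPolynomial

noncomputable section

/-- The set of associated primes `Ass(L)` of the quotient by an ideal `L`. -/
def assOf {A : Type} [CommRing A] (L : Ideal A) : Set (Ideal A) :=
  associatedPrimes A (A ⧸ L)

/-- `𝔄` is the stable value `Ass^∞(L)` of `Ass(L^k)` for all large `k`. -/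
def IsStableAssValue {A : Type} [CommRing A] (L : Ideal A) (𝔄 : Set (Ideal A)) : Prop :=
  ∃ N : ℕ, ∀ k : ℕ, N ≤ k → assOf (L ^ k) = 𝔄

/-- `Ass^*(L) = ⋃_{k ≥ 1} Ass(L^k)`. -/
def assStar {A : Type} [CommRing A] (L : Ideal A) : Set (Ideal A) :=
  {p | ∃ k : ℕ, 1 ≤ k ∧ p ∈ assOf (L ^ k)}

/-- The local v-number `v_p(L)`: the least degree of a homogeneous `f` with `(L : f) = p`. -/
def vnum {σ K : Type} [Field K] (L p : Ideal (MvPolynomial σ K)) : ℕ :=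
  sInf {d : ℕ | ∃ f : MvPolynomial σ K, f.IsHomogeneous d ∧ L.colon (Ideal.span {f}) = p}

/-- The v-number `v(L) = min_{p ∈ Ass(L)} v_p(L)`. -/
def vnumber {σ K : Type} [Field K] (L : Ideal (MvPolynomial σ K)) : ℕ :=
  sInf {d : ℕ | ∃ p ∈ assOf L, ∃ f : MvPolynomial σ K,
    f.IsHomogeneous d ∧ L.colon (Ideal.span {f}) = p}

/-- The initial degree `α(L)`: the least `d` such that `L` contains a nonzero
homogeneous element of degree `d`. -/
def alphaDeg {σ K : Type} [Field K] (L : Ideal (MvPolynomial σ K)) : ℕ :=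
  sInf {d : ℕ | ∃ f ∈ L, f ≠ 0 ∧ MvPolynomial.IsHomogeneous f d}

/-- A graded (homogeneous) ideal: one containing all homogeneous components
of each of its elements. -/
def IsGradedIdeal {σ K : Type} [Field K] (I : Ideal (MvPolynomial σ K)) : Prop :=
  ∀ f ∈ I, ∀ d : ℕ, homogeneousComponent d f ∈ I

/-- A monomial ideal: an ideal generated by monomials. -/
def IsMonomialIdeal {σ K : Type} [Field K] (I : Ideal (MvPolynomial σ K)) : Prop :=
  ∃ G : Set (σ →₀ ℕ), I = Ideal.span ((fun a => (monomial a (1 : K))) '' G)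

section Graded

variable {ι σ S : Type*} [CommRing S] [SetLike σ S] [AddSubgroupClass σ S]
  [AddCommMonoid ι] [LinearOrder ι] [IsOrderedCancelAddMonoid ι] {𝒜 : ι → σ} [GradedRing 𝒜]

/-- If a homogeneous ideal contains the product of a homogeneous element and two sums of
homogeneous elements, it contains the product of that element with the top-degree terms. -/
theorem Ideal.IsHomogeneous.top_mul_top_mem {A : Ideal S} (hA : A.IsHomogeneous 𝒜)
    {u s : Finset ι} {e d t : ι} (hu : ∀ i ∈ u, i < e) (hs : ∀ j ∈ s, j < d)
    {h F : ι → S} (hh : ∀ i, h i ∈ 𝒜 i) (hF : ∀ j, F j ∈ 𝒜 j) {c : S} (hc : c ∈ 𝒜 t)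
    (hmem : (∑ i ∈ insert e u, h i) * (c * ∑ j ∈ insert d s, F j) ∈ A) :
    h e * (c * F d) ∈ A := by
  have key := hA (t + (e + d)) hmem
  have hterm (i j : ι) : c * (h i * F j) ∈ 𝒜 (t + (i + j)) :=
    SetLike.mul_mem_graded hc (SetLike.mul_mem_graded (hh i) (hF j))
  have hle {v : Finset ι} {a i : ι} (hv : ∀ i ∈ v, i < a) (hi : i ∈ insert a v) : i ≤ a := by
    rcases Finset.mem_insert.1 hi with rfl | hi
    exacts [le_rfl, (hv i hi).le]
  have hproj : (DirectSum.decompose 𝒜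
      ((∑ i ∈ insert e u, h i) * (c * ∑ j ∈ insert d s, F j)) (t + (e + d)) : S) =
      h e * (c * F d) := by
    rw [mul_left_comm, Finset.sum_mul_sum, ← Finset.sum_product', Finset.mul_sum,
      ← GradedRing.proj_apply, map_sum, Finset.sum_eq_single (e, d)]
    · rw [GradedRing.proj_apply, DirectSum.decompose_of_mem_same _ (hterm e d), mul_left_comm]
    · rintro ⟨i, j⟩ hij hne
      rw [Finset.mem_product] at hij
      rw [GradedRing.proj_apply, DirectSum.decompose_of_mem_ne _ (hterm i j)]
      intro heq
      obtain ⟨h1, h2⟩ := (add_eq_add_iff_eq_and_eq (hle hu hij.1) (hle hs hij.2)).1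
        (add_left_cancel heq)
      exact hne (Prod.ext h1 h2)
    · simp
  rwa [hproj] at key

/-- If a prime `p` is of the form `(A : c * ∑ F j)` with `A` a homogeneous ideal and `c`, `F j`
homogeneous, then `p` contains each term of every sum of homogeneous elements of distinct degrees
that lies in `p`. -/
theorem Ideal.IsHomogeneous.mem_of_sum_mem_of_isPrime {A : Ideal S} (hA : A.IsHomogeneous 𝒜)
    {p : Ideal S} [hp : p.IsPrime] {F : ι → S} (hF : ∀ j, F j ∈ 𝒜 j) (s : Finset ι)
    {t : ι} {c : S} (hc : c ∈ 𝒜 t) (hcol : ∀ x, x ∈ p ↔ x * (c * ∑ j ∈ s, F j) ∈ A)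
    {h : ι → S} (hh : ∀ i, h i ∈ 𝒜 i) (u : Finset ι) (hu : ∑ i ∈ u, h i ∈ p) :
    ∀ i ∈ u, h i ∈ p := by
  induction s using Finset.induction_on_max generalizing t c u with
  | empty => exact absurd ((hcol 1).2 (by simp)) (p.ne_top_iff_one.1 hp.ne_top)
  | insert d s hs ihs =>
    induction u using Finset.induction_on_max with
    | empty => simp
    | insert e u hue ihu =>
      have heu : e ∉ u := fun he => lt_irrefl _ (hue e he)
      have hds : d ∉ s := fun hd => lt_irrefl _ (hs d hd)
      by_cases he : h e ∈ p
      · rw [Finset.sum_insert heu] at hu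
        have := ihu ((p.add_mem_iff_right he).1 hu)
        simpa [he] using this
      · refine ihs (SetLike.mul_mem_graded (hh e) hc) (fun x => ?_) _ hu
        have htop : h e * (c * F d) ∈ A := hA.top_mul_top_mem hue hs hh hF hc ((hcol _).1 hu)
        have hx : x ∈ p ↔ x * h e ∈ p :=
          ⟨fun hx => p.mul_mem_right _ hx, fun hx => (hp.mem_or_mem hx).resolve_right he⟩
        have hsplit : x * h e * (c * ∑ j ∈ insert d s, F j) =
            x * (h e * (c * F d)) + x * (h e * c * ∑ j ∈ s, F j) := by
          rw [Finset.sum_insert hds]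
          ring
        rw [hx, hcol, hsplit, A.add_mem_iff_right (A.mul_mem_left x htop)]

/-- If a prime `p` is of the form `(A : f)` with `A` a homogeneous ideal, then `p = (A : g)` for
some homogeneous component `g` of `f`. -/
theorem Ideal.IsHomogeneous.exists_component_colon {A : Ideal S} (hA : A.IsHomogeneous 𝒜)
    {p : Ideal S} [hp : p.IsPrime] {f : S} (hcol : ∀ x, x ∈ p ↔ x * f ∈ A) :
    ∃ i, ∀ x, x ∈ p ↔ x * (DirectSum.decompose 𝒜 f i : S) ∈ A := by
  classical
  let _ : AddLeftCancelMonoid ι :=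
    { ‹AddCommMonoid ι› with add_left_cancel := fun _ _ _ => add_left_cancel }
  set F : ι → S := fun i => (DirectSum.decompose 𝒜 f i : S)
  have hF (i : ι) : F i ∈ 𝒜 i := SetLike.coe_mem _
  set s := (DirectSum.decompose 𝒜 f).support
  have hsum : ∑ j ∈ s, F j = f := DirectSum.sum_support_decompose 𝒜 f
  have hpA {x : S} (hx : x ∈ p) (j : ι) : x * F j ∈ A := by
    have hcomp (i : ι) (hi : i ∈ (DirectSum.decompose 𝒜 x).support) :
        (DirectSum.decompose 𝒜 x i : S) ∈ p :=
      hA.mem_of_sum_mem_of_isPrime hF s SetLike.GradedOne.one_mem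
        (fun x => by rw [one_mul, hsum, hcol]) (fun i => SetLike.coe_mem _) _
        (by rwa [DirectSum.sum_support_decompose]) i hi
    rw [← DirectSum.sum_support_decompose 𝒜 x, Finset.sum_mul]
    refine A.sum_mem fun i hi => ?_
    have := hA (i + j) ((hcol _).1 (hcomp i hi))
    rwa [DirectSum.coe_decompose_mul_add_of_left_mem 𝒜 (SetLike.coe_mem _)] at this
  have hinf : s.inf (fun j => A.colon {F j}) ≤ p := fun x hx => by
    rw [Submodule.mem_finsetInf] at hx
    rw [hcol, ← hsum, Finset.mul_sum]
    exact A.sum_mem fun j hj => Submodule.mem_colon_singleton.1 (hx j hj)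
  obtain ⟨i, -, hi⟩ := (hp.inf_le').1 hinf
  exact ⟨i, fun x => ⟨fun hx => hpA hx i, fun hx => hi (Submodule.mem_colon_singleton.2 hx)⟩⟩

end Graded

namespace MvPolynomial

noncomputable section SumVars

open scoped TensorProduct

variable {K σ τ : Type*} [Field K]

theorem tensorEquivSum_tmul (r : MvPolynomial σ K) (t : MvPolynomial τ K) :
    tensorEquivSum K σ τ K (r ⊗ₜ t) = rename Sum.inl r * rename Sum.inr t := by
  have h1 : ((tensorEquivSum K σ τ K).toAlgHom.comp Algebra.TensorProduct.includeLeft) =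
      (rename Sum.inl : MvPolynomial σ K →ₐ[K] MvPolynomial (σ ⊕ τ) K) := by
    ext i; simp
  have h2 : ((tensorEquivSum K σ τ K).toAlgHom.comp Algebra.TensorProduct.includeRight) =
      (rename Sum.inr : MvPolynomial τ K →ₐ[K] MvPolynomial (σ ⊕ τ) K) := by
    ext i; simp
  rw [← h1, ← h2, ← one_mul t, ← mul_one r, ← Algebra.TensorProduct.tmul_mul_tmul, map_mul]
  simp

theorem induction_on_rename_mul_rename {motive : MvPolynomial (σ ⊕ τ) K → Prop}
    (s : MvPolynomial (σ ⊕ τ) K) (zero : motive 0)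
    (mul : ∀ r t, motive (rename Sum.inl r * rename Sum.inr t))
    (add : ∀ x y, motive x → motive y → motive (x + y)) : motive s := by
  obtain ⟨z, rfl⟩ := (tensorEquivSum K σ τ K).surjective s
  induction z using TensorProduct.induction_on with
  | zero => simpa using zero
  | tmul r t => simpa only [tensorEquivSum_tmul] using mul r t
  | add x y hx hy => simpa only [map_add] using add _ _ hx hy

/-- Ideals in disjoint sets of variables intersect in their product. -/
theorem map_inl_inf_map_inr (Q : Ideal (MvPolynomial σ K)) (P : Ideal (MvPolynomial τ K)) :
    Q.map (rename (R := K) (Sum.inl : σ → σ ⊕ τ)) ⊓ P.map (rename (R := K) Sum.inr) =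
      Q.map (rename (R := K) (Sum.inl : σ → σ ⊕ τ)) * P.map (rename (R := K) Sum.inr) := by
  refine le_antisymm ?_ Ideal.mul_le_inf
  rintro h ⟨hQ, hP⟩
  obtain ⟨π, hπ⟩ := (P.restrictScalars K).subtype.exists_leftInverse_of_injective
    (Submodule.ker_subtype _)
  let Φ : MvPolynomial (σ ⊕ τ) K →ₗ[K] MvPolynomial (σ ⊕ τ) K :=
    (tensorEquivSum K σ τ K).toLinearMap ∘ₗ
      (((P.restrictScalars K).subtype ∘ₗ π).lTensor _) ∘ₗ (tensorEquivSum K σ τ K).symm.toLinearMap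
  have hΦ (r : MvPolynomial σ K) (t : MvPolynomial τ K) :
      Φ (rename Sum.inl r * rename Sum.inr t) =
        rename Sum.inl r * rename Sum.inr (π t : MvPolynomial τ K) := by
    simp [Φ, ← tensorEquivSum_tmul]
  have hfix (t : MvPolynomial τ K) (ht : t ∈ P) : (π t : MvPolynomial τ K) = t :=
    congrArg Subtype.val (LinearMap.congr_fun hπ ⟨t, ht⟩)
  have hΦP : Φ h = h := by
    refine Submodule.closure_induction (p := fun x _ => Φ x = x) (map_zero Φ)
      (fun x y _ _ hx hy => by rw [map_add, hx, hy]) ?_ hP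
    rintro a _ ⟨t, ht, rfl⟩
    induction a using induction_on_rename_mul_rename with
    | zero => simp
    | mul r t' =>
      rw [smul_eq_mul, mul_assoc, ← map_mul, hΦ, hfix _ (P.mul_mem_left _ ht)]
    | add x y hx hy => rw [add_smul, map_add, hx, hy]
  rw [← hΦP]
  refine Submodule.closure_induction (p := fun x _ => Φ x ∈ _) (by simp)
    (fun x y _ _ hx hy => by rw [map_add]; exact add_mem hx hy) ?_ hQ
  rintro a _ ⟨r, hr, rfl⟩
  induction a using induction_on_rename_mul_rename with
  | zero => simp
  | mul r' t =>
    rw [smul_eq_mul, mul_right_comm, ← map_mul, hΦ]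
    exact Ideal.mul_mem_mul (Ideal.mem_map_of_mem _ (Q.mul_mem_left _ hr))
      (Ideal.mem_map_of_mem _ (π t).2)
  | add x y hx hy => rw [add_smul, map_add]; exact add_mem hx hy

/-- A nonzero polynomial in the right variables is a nonzerodivisor modulo an ideal extended from
the left variables. -/
theorem mem_map_inl_of_rename_inr_mul_mem {Q : Ideal (MvPolynomial σ K)} {g : MvPolynomial τ K}
    (hg : g ≠ 0) {h : MvPolynomial (σ ⊕ τ) K}
    (hmem : rename Sum.inr g * h ∈ Q.map (rename (R := K) (Sum.inl : σ → σ ⊕ τ))) :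
    h ∈ Q.map (rename (R := K) (Sum.inl : σ → σ ⊕ τ)) := by
  have hg' : rename (Sum.inr : τ → σ ⊕ τ) g ≠ 0 :=
    (map_ne_zero_iff _ (rename_injective _ Sum.inr_injective)).2 hg
  have hinf := map_inl_inf_map_inr Q (Ideal.span {g})
  rw [Ideal.map_span, Set.image_singleton] at hinf
  have hmem' := hinf.le ⟨hmem, Ideal.mul_mem_right _ _ (Ideal.mem_span_singleton_self _)⟩
  obtain ⟨a, ha, hag⟩ := Ideal.mem_mul_span_singleton.1 hmem'
  rw [mul_comm] at hag
  rwa [← mul_left_cancel₀ hg' hag]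

/-- A nonzero polynomial in the left variables is a nonzerodivisor modulo an ideal extended from
the right variables. -/
theorem mem_map_inr_of_rename_inl_mul_mem {P : Ideal (MvPolynomial τ K)} {g : MvPolynomial σ K}
    (hg : g ≠ 0) {h : MvPolynomial (σ ⊕ τ) K}
    (hmem : rename Sum.inl g * h ∈ P.map (rename (R := K) (Sum.inr : τ → σ ⊕ τ))) :
    h ∈ P.map (rename (R := K) (Sum.inr : τ → σ ⊕ τ)) := by
  have hg' : rename (Sum.inl : σ → σ ⊕ τ) g ≠ 0 :=
    (map_ne_zero_iff _ (rename_injective _ Sum.inl_injective)).2 hg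
  have hinf := map_inl_inf_map_inr (Ideal.span {g}) P
  rw [Ideal.map_span, Set.image_singleton] at hinf
  have hmem' := hinf.le ⟨Ideal.mul_mem_right _ _ (Ideal.mem_span_singleton_self _), hmem⟩
  obtain ⟨a, ha, hag⟩ := Ideal.mem_span_singleton_mul.1 hmem'
  rwa [← mul_left_cancel₀ hg' hag]

/-- The ideal of polynomials all of whose monomials have weight at least `e`. -/
def weightGE (K : Type*) [Field K] (w : σ → ℕ) (e : ℕ) : Ideal (MvPolynomial σ K) where
  carrier := {f | ∀ s ∈ f.support, e ≤ Finsupp.weight w s}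
  zero_mem' := by simp
  add_mem' hf hg s hs := by
    classical
    rcases Finset.mem_union.1 (support_add hs) with h | h
    exacts [hf s h, hg s h]
  smul_mem' c f hf s hs := by
    classical
    obtain ⟨a, -, b, hb, rfl⟩ := Finset.mem_add.1 (support_mul c f hs)
    rw [map_add]
    exact (hf b hb).trans (Nat.le_add_left _ _)

theorem pow_le_weightGE {w : σ → ℕ} {e : ℕ} {L : Ideal (MvPolynomial σ K)}
    (hL : L ≤ weightGE K w e) (k : ℕ) : L ^ k ≤ weightGE K w (e * k) := by
  classical
  induction k with
  | zero => intro f _ s _; simp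
  | succ k ih =>
    rw [pow_succ, Ideal.mul_le]
    intro f hf g hg s hs
    obtain ⟨a, ha, b, hb, rfl⟩ := Finset.mem_add.1 (support_mul f g hs)
    rw [map_add, mul_add_one]
    exact add_le_add (ih hf a ha) (hL hg b hb)

theorem _root_.Finsupp.weight_sumElim {M : Type*} [AddCommMonoid M] (v : σ → M) (w : τ → M)
    (a : σ →₀ ℕ) (b : τ →₀ ℕ) :
    Finsupp.weight (Sum.elim v w) (a.sumElim b) = Finsupp.weight v a + Finsupp.weight w b := by
  simp only [Finsupp.weight_apply, Finsupp.sum_sumElim]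
  rfl

theorem _root_.Finsupp.degree_sumElim (a : σ →₀ ℕ) (b : τ →₀ ℕ) :
    (a.sumElim b).degree = a.degree + b.degree := by
  rw [Finsupp.sumElim_eq_add, map_add, Finsupp.degree_mapDomain, Finsupp.degree_mapDomain]

theorem _root_.Finsupp.weight_toLex_single [LinearOrder τ] (b : τ →₀ ℕ) :
    Finsupp.weight (fun j => toLex (Finsupp.single j 1)) b = toLex b := by
  induction b using Finsupp.induction_linear with
  | zero => simp
  | add f g hf hg => rw [map_add, hf, hg, toLex_add]
  | single j n =>
    have h : Finsupp.single j n = n • Finsupp.single j 1 := by simp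
    rw [Finsupp.weight_single, h]
    rfl

theorem monomial_sumElim (a : σ →₀ ℕ) (b : τ →₀ ℕ) (c : K) :
    monomial (a.sumElim b) c = rename Sum.inl (monomial a c) * rename Sum.inr (monomial b 1) := by
  rw [rename_monomial, rename_monomial, monomial_mul, mul_one, Finsupp.sumElim_eq_add]

/-- The multigrading of `K[σ ⊕ τ]` by exponents of the right variables, ordered
lexicographically. -/
def inrWeight (σ τ : Type*) [LinearOrder τ] : σ ⊕ τ → Lex (τ →₀ ℕ) :=
  Sum.elim 0 fun j => toLex (Finsupp.single j 1)

theorem weight_inrWeight_sumElim [LinearOrder τ] (a : σ →₀ ℕ) (b : τ →₀ ℕ) :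
    Finsupp.weight (inrWeight σ τ) (a.sumElim b) = toLex b := by
  rw [inrWeight, Finsupp.weight_sumElim, Finsupp.weight_toLex_single]
  simp [Finsupp.weight_apply]

/-- A multihomogeneous polynomial in the right variables is a polynomial in the left variables
times a monomial. -/
theorem exists_eq_rename_inl_mul_monomial [LinearOrder τ] {φ : MvPolynomial (σ ⊕ τ) K}
    {b : τ →₀ ℕ} (hφ : IsWeightedHomogeneous (inrWeight σ τ) φ (toLex b)) {d : ℕ}
    (hd : φ.IsHomogeneous d) :
    ∃ r : MvPolynomial σ K, r.IsHomogeneous (d - b.degree) ∧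
      φ = rename Sum.inl r * rename Sum.inr (monomial b 1) := by
  have hsplit (s : σ ⊕ τ →₀ ℕ) (hs : s ∈ φ.support) :
      (s.comapDomain Sum.inl Sum.inl_injective.injOn).sumElim b = s := by
    have h := Finsupp.comapDomain_sumElim_comapDomain s
    have hw := hφ (mem_support_iff.1 hs)
    rw [← h, weight_inrWeight_sumElim] at hw
    rw [← toLex.injective hw]
    exact h
  refine ⟨∑ s ∈ φ.support, monomial (s.comapDomain Sum.inl Sum.inl_injective.injOn) (coeff s φ),
    IsHomogeneous.sum _ _ _ fun s hs => isHomogeneous_monomial _ ?_, ?_⟩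
  · have hs' : Finsupp.weight (fun _ => 1) s = d := hd (mem_support_iff.1 hs)
    rw [← Finsupp.degree_eq_weight_one, ← hsplit s hs, Finsupp.degree_sumElim] at hs'
    omega
  · conv_lhs => rw [φ.as_sum]
    rw [map_sum, Finset.sum_mul]
    refine Finset.sum_congr rfl fun s hs => ?_
    rw [← monomial_sumElim, hsplit s hs]

theorem map_inr_le_weightGE {J : Ideal (MvPolynomial τ K)} {e : ℕ}
    (hJ : ∀ f ∈ J, ∀ s ∈ f.support, e ≤ s.degree) :
    J.map (rename (R := K) (Sum.inr : τ → σ ⊕ τ)) ≤ weightGE K (Sum.elim 0 1) e := by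
  classical
  rw [Ideal.map_le_iff_le_comap]
  intro f hf s hs
  change s ∈ (rename _ f).support at hs
  rw [support_rename_of_injective Sum.inr_injective] at hs
  obtain ⟨b, hb, rfl⟩ := Finset.mem_image.1 hs
  have := hJ f hf b hb
  have h0 : Finsupp.mapDomain (Sum.inr : τ → σ ⊕ τ) b = (0 : σ →₀ ℕ).sumElim b := by
    simp [Finsupp.sumElim_eq_add]
  rw [h0, Finsupp.weight_sumElim, map_zero, zero_add]
  rwa [Finsupp.degree_eq_weight_one] at this

end SumVars
end MvPolynomial

section MainProof

attribute [local instance] MvPolynomial.weightedGradedAlgebra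

variable {K σ τ : Type} [Field K]

theorem colon_span_singleton_eq_iff {A : Type} [CommRing A] {L p : Ideal A} {f : A} :
    L.colon (Ideal.span {f}) = p ↔ ∀ x, x ∈ p ↔ x * f ∈ L := by
  rw [SetLike.ext_iff]
  simp only [Ideal.mem_colon_span_singleton]
  exact forall_congr' fun x => Iff.comm

theorem exists_colon_of_mem_assOf {A : Type} [CommRing A] [IsNoetherianRing A] {L p : Ideal A}
    (hp : p ∈ assOf L) : p.IsPrime ∧ ∃ f, ∀ x, x ∈ p ↔ x * f ∈ L := by
  obtain ⟨hprime, y, hy⟩ := isAssociatedPrime_iff.1 (AssociatedPrimes.mem_iff.1 hp)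
  obtain ⟨f, rfl⟩ := Ideal.Quotient.mk_surjective y
  refine ⟨hprime, f, fun x => ?_⟩
  rw [hy, Submodule.mem_colon_singleton, Submodule.mem_bot, ← Ideal.Quotient.eq_zero_iff_mem,
    map_mul]
  rfl

theorem IsGradedIdeal.isHomogeneous {I : Ideal (MvPolynomial σ K)} (hI : IsGradedIdeal I) :
    I.IsHomogeneous (weightedHomogeneousSubmodule K (1 : σ → ℕ)) := fun d f hf => by
  have h := weightedDecomposition.decompose'_apply K (1 : σ → ℕ) f d
  exact h ▸ hI f hf d

theorem homogeneousComponent_degree_ne_zero {f : MvPolynomial σ K} {s : σ →₀ ℕ}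
    (hs : s ∈ f.support) : homogeneousComponent s.degree f ≠ 0 := fun h0 => by
  have := congrArg (coeff s) h0
  rw [coeff_homogeneousComponent, if_pos rfl, coeff_zero] at this
  exact mem_support_iff.1 hs this

theorem IsGradedIdeal.alphaDeg_le_degree {I : Ideal (MvPolynomial σ K)} (hI : IsGradedIdeal I)
    {f : MvPolynomial σ K} (hf : f ∈ I) {s : σ →₀ ℕ} (hs : s ∈ f.support) :
    alphaDeg I ≤ s.degree := by
  refine Nat.sInf_le ⟨homogeneousComponent s.degree f, hI f hf _,
    homogeneousComponent_degree_ne_zero hs, homogeneousComponent_isHomogeneous _ _⟩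

theorem IsGradedIdeal.exists_isHomogeneous_alphaDeg {I : Ideal (MvPolynomial σ K)}
    (hI : IsGradedIdeal I) (hne : I ≠ ⊥) : ∃ f ∈ I, f ≠ 0 ∧ f.IsHomogeneous (alphaDeg I) := by
  obtain ⟨f, hf, hf0⟩ := Submodule.exists_mem_ne_zero_of_ne_bot hne
  obtain ⟨s, hs⟩ := support_nonempty.2 hf0
  refine Nat.sInf_mem (s := {d : ℕ | ∃ f ∈ I, f ≠ 0 ∧ MvPolynomial.IsHomogeneous f d})
    ⟨s.degree, homogeneousComponent s.degree f, hI f hf _,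
      homogeneousComponent_degree_ne_zero hs, homogeneousComponent_isHomogeneous _ _⟩

theorem IsGradedIdeal.isHomogeneous_map_rename_pow {I : Ideal (MvPolynomial σ K)}
    (hI : IsGradedIdeal I) (i : σ → τ) (k : ℕ) :
    (I.map (rename (R := K) i) ^ k).IsHomogeneous
      (weightedHomogeneousSubmodule K (1 : τ → ℕ)) := by
  have h1 : (I.map (rename (R := K) i)).IsHomogeneous
      (weightedHomogeneousSubmodule K (1 : τ → ℕ)) := by
    obtain ⟨T, hT⟩ := (Ideal.IsHomogeneous.iff_exists _ _).1 hI.isHomogeneous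
    rw [hT, Ideal.map_span]
    refine Ideal.homogeneous_span _ _ ?_
    rintro _ ⟨_, ⟨⟨f, d, hf⟩, -, rfl⟩, rfl⟩
    exact ⟨d, IsHomogeneous.rename_isHomogeneous hf⟩
  induction k with
  | zero => rw [pow_zero, Ideal.one_eq_top]; exact Ideal.IsHomogeneous.top _
  | succ k ih => rw [pow_succ]; exact ih.mul h1

/-- If a prime `p` is of the form `(A : f)` with `A` generated by weighted homogeneous elements,
then `p = (A : g)` for some weighted homogeneous component `g` of `f`. -/
theorem exists_weightedHomogeneousComponent_colon {M : Type} [AddCommMonoid M] [LinearOrder M]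
    [IsOrderedCancelAddMonoid M] (w : σ → M) {T : Set (MvPolynomial σ K)}
    (hT : ∀ t ∈ T, ∃ i, IsWeightedHomogeneous w t i) {p : Ideal (MvPolynomial σ K)} [p.IsPrime]
    {f : MvPolynomial σ K} (hcol : ∀ x, x ∈ p ↔ x * f ∈ Ideal.span T) :
    ∃ i, ∀ x, x ∈ p ↔ x * weightedHomogeneousComponent w i f ∈ Ideal.span T := by
  have hA : (Ideal.span T).IsHomogeneous (weightedHomogeneousSubmodule K w) :=
    Ideal.homogeneous_span _ _ hT
  obtain ⟨i, hi⟩ := hA.exists_component_colon hcol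
  have hdec : (DirectSum.decompose (weightedHomogeneousSubmodule K w) f i : MvPolynomial σ K) =
      weightedHomogeneousComponent w i f := weightedDecomposition.decompose'_apply K w f i
  rw [hdec] at hi
  exact ⟨i, hi⟩

theorem isWeightedHomogeneous_inrWeight_rename_inl [LinearOrder τ] (f : MvPolynomial σ K) :
    IsWeightedHomogeneous (inrWeight σ τ) (rename Sum.inl f) 0 := by
  classical
  intro s hs
  rw [← mem_support_iff] at hs
  change s ∈ (rename _ f).support at hs
  rw [support_rename_of_injective Sum.inl_injective] at hs
  obtain ⟨a, -, rfl⟩ := Finset.mem_image.1 hs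
  have h0 : Finsupp.mapDomain (Sum.inl : σ → σ ⊕ τ) a = a.sumElim (0 : τ →₀ ℕ) := by
    simp [Finsupp.sumElim_eq_add]
  rw [h0, weight_inrWeight_sumElim]
  rfl

/-- If `(A : f)` is prime with `A` extended from the left variables and `f` homogeneous of degree
`d` having degree at least `e` in the right variables, then it is `(A : g)` for a homogeneous `g`
of degree at most `d - e`. -/
theorem exists_colon_of_mem_weightGE [LinearOrder τ] {Q : Ideal (MvPolynomial σ K)}
    {p : Ideal (MvPolynomial (σ ⊕ τ) K)} [hp : p.IsPrime] {f : MvPolynomial (σ ⊕ τ) K}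
    (hcol : ∀ x, x ∈ p ↔ x * f ∈ Q.map (rename (R := K) (Sum.inl : σ → σ ⊕ τ)))
    {d e : ℕ} (hd : f.IsHomogeneous d) (he : f ∈ weightGE K (Sum.elim 0 1) e) :
    ∃ d' g, d' + e ≤ d ∧ IsHomogeneous g d' ∧
      ∀ x, x ∈ p ↔ x * g ∈ Q.map (rename (R := K) (Sum.inl : σ → σ ⊕ τ)) := by
  obtain ⟨i, hi⟩ := exists_weightedHomogeneousComponent_colon (inrWeight σ τ)
    (by rintro _ ⟨f, -, rfl⟩; exact ⟨0, isWeightedHomogeneous_inrWeight_rename_inl f⟩) hcol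
  obtain ⟨b, rfl⟩ := toLex.surjective i
  set φ := weightedHomogeneousComponent (inrWeight σ τ) (toLex b) f with hφ
  have hsupp : ∀ s ∈ φ.support, s ∈ f.support ∧ Finsupp.weight (inrWeight σ τ) s = toLex b := by
    intro s hs
    rwa [hφ, support_weightedHomogeneousComponent, Finset.mem_filter] at hs
  have hφd : φ.IsHomogeneous d := fun s hs =>
    hd (mem_support_iff.1 (hsupp s (mem_support_iff.2 hs)).1)
  obtain ⟨r, hr, hφr⟩ := exists_eq_rename_inl_mul_monomial
    (weightedHomogeneousComponent_isWeightedHomogeneous _ _) hφd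
  have hφ0 : φ ≠ 0 := fun h0 =>
    (p.ne_top_iff_one.1 hp.ne_top) ((hi 1).2 (by rw [h0, mul_zero]; exact zero_mem _))
  obtain ⟨s, hs⟩ := support_nonempty.2 hφ0
  obtain ⟨hsf, hsb⟩ := hsupp s hs
  have hse : e ≤ Finsupp.weight (Sum.elim 0 fun _ => 1) s := he s hsf
  have hsd : Finsupp.weight (fun _ => 1) s = d := hd (mem_support_iff.1 hsf)
  rw [← Finsupp.comapDomain_sumElim_comapDomain s] at hse hsd hsb
  rw [weight_inrWeight_sumElim] at hsb
  rw [toLex.injective hsb] at hse hsd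
  rw [Finsupp.weight_sumElim, ← Finsupp.degree_eq_weight_one] at hse
  rw [← Finsupp.degree_eq_weight_one, Finsupp.degree_sumElim] at hsd
  have h0 : Finsupp.weight (0 : σ → ℕ) (s.comapDomain Sum.inl Sum.inl_injective.injOn) = 0 := by
    simp [Finsupp.weight_apply]
  refine ⟨d - b.degree, rename Sum.inl r, by omega,
    IsHomogeneous.rename_isHomogeneous hr, fun x => ?_⟩
  rw [hi, hφ, hφr, ← Ideal.map]
  refine ⟨fun h => ?_, fun h => ?_⟩
  · refine mem_map_inl_of_rename_inr_mul_mem (g := monomial b 1) (by simp) ?_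
    rwa [mul_comm, mul_assoc]
  · rw [← mul_assoc]
    exact Ideal.mul_mem_right _ _ h

/-- The formula for `v_p((IJ)^k)` when `p` is an associated prime of the power of the ideal in the
left variables. -/
theorem vnum_mul_pow_inl [LinearOrder τ]
    {I : Ideal (MvPolynomial σ K)} {J : Ideal (MvPolynomial τ K)}
    (hInz : I ≠ ⊥) (hIgr : IsGradedIdeal I) (hJnz : J ≠ ⊥) (hJgr : IsGradedIdeal J) (k : ℕ)
    {p : Ideal (MvPolynomial (σ ⊕ τ) K)} [p.IsPrime]
    (hass : ∃ f, ∀ x, x ∈ p ↔ x * f ∈ I.map (rename (R := K) Sum.inl) ^ k) :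
    vnum ((I.map (rename (R := K) Sum.inl) * J.map (rename (R := K) Sum.inr)) ^ k) p =
      vnum (I.map (rename (R := K) Sum.inl) ^ k) p + alphaDeg J * k := by
  set eI := I.map (rename (R := K) (Sum.inl : σ → σ ⊕ τ))
  set eJ := J.map (rename (R := K) (Sum.inr : τ → σ ⊕ τ))
  have hIk : eI ^ k = (I ^ k).map (rename (R := K) (Sum.inl : σ → σ ⊕ τ)) :=
    (Ideal.map_pow _ _ _).symm
  have hJk : eJ ^ k = (J ^ k).map (rename (R := K) (Sum.inr : τ → σ ⊕ τ)) :=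
    (Ideal.map_pow _ _ _).symm
  have hmul : (eI * eJ) ^ k = eI ^ k ⊓ eJ ^ k := by
    rw [mul_pow, hIk, hJk, map_inl_inf_map_inr]
  obtain ⟨g, hgJ, hg0, hgd⟩ := hJgr.exists_isHomogeneous_alphaDeg hJnz
  obtain ⟨r, hrI, hr0⟩ := Submodule.exists_mem_ne_zero_of_ne_bot hInz
  have hgreg {h : MvPolynomial (σ ⊕ τ) K} (hh : rename Sum.inr (g ^ k) * h ∈ eI ^ k) :
      h ∈ eI ^ k := by
    rw [hIk] at hh ⊢
    exact mem_map_inl_of_rename_inr_mul_mem (pow_ne_zero _ hg0) hh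
  have hgJk : rename Sum.inr (g ^ k) ∈ eJ ^ k :=
    hJk ▸ Ideal.mem_map_of_mem _ (Ideal.pow_mem_pow hgJ k)
  have hrIk : rename Sum.inl (r ^ k) ∈ eI ^ k :=
    hIk ▸ Ideal.mem_map_of_mem _ (Ideal.pow_mem_pow hrI k)
  have hne : {d : ℕ | ∃ f : MvPolynomial (σ ⊕ τ) K,
      f.IsHomogeneous d ∧ (eI ^ k).colon (Ideal.span {f}) = p}.Nonempty := by
    obtain ⟨f, hf⟩ := hass
    obtain ⟨d, hd⟩ := (hIgr.isHomogeneous_map_rename_pow Sum.inl k).exists_component_colon hf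
    exact ⟨d, _, (mem_weightedHomogeneousSubmodule K _ _ _).1 (SetLike.coe_mem
      (DirectSum.decompose (weightedHomogeneousSubmodule K (1 : σ ⊕ τ → ℕ)) f d)),
      colon_span_singleton_eq_iff.2 hd⟩
  have hmem : vnum (eI ^ k) p + alphaDeg J * k ∈ {d : ℕ | ∃ f : MvPolynomial (σ ⊕ τ) K,
      f.IsHomogeneous d ∧ ((eI * eJ) ^ k).colon (Ideal.span {f}) = p} := by
    obtain ⟨f, hfd, hf⟩ := Nat.sInf_mem hne
    rw [colon_span_singleton_eq_iff] at hf
    refine ⟨f * rename Sum.inr (g ^ k),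
      hfd.mul (IsHomogeneous.rename_isHomogeneous (hgd.pow k)),
      colon_span_singleton_eq_iff.2 fun x => ?_⟩
    rw [hf, hmul, ← mul_assoc]
    exact ⟨fun h => ⟨Ideal.mul_mem_right _ _ h, Ideal.mul_mem_left _ _ hgJk⟩,
      fun h => hgreg (by rw [mul_comm]; exact h.1)⟩
  refine le_antisymm (Nat.sInf_le hmem) (le_csInf ⟨_, hmem⟩ ?_)
  rintro d ⟨f, hfd, hf⟩
  rw [colon_span_singleton_eq_iff, hmul] at hf
  obtain ⟨f₀, hf₀⟩ := hass
  have hfJ : f ∈ eJ ^ k := by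
    have := ((hf _).1 ((hf₀ _).2 (Ideal.mul_mem_right f₀ _ hrIk))).2
    rw [hJk] at this ⊢
    exact mem_map_inr_of_rename_inl_mul_mem (pow_ne_zero _ hr0) this
  obtain ⟨d', h, hle, hhd, hh⟩ := exists_colon_of_mem_weightGE (Q := I ^ k) (p := p) (f := f)
    (fun x => by
      rw [hf, ← hIk]
      exact ⟨fun hx => hx.1, fun hx => ⟨hx, Ideal.mul_mem_left _ _ hfJ⟩⟩) hfd
    (pow_le_weightGE (map_inr_le_weightGE fun f hf s hs => hJgr.alphaDeg_le_degree hf hs) k hfJ)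
  rw [← hIk] at hh
  have : vnum (eI ^ k) p ≤ d' := Nat.sInf_le ⟨h, hhd, colon_span_singleton_eq_iff.2 hh⟩
  omega

theorem mem_map_renameEquiv_iff (e : σ ≃ τ) {L : Ideal (MvPolynomial σ K)}
    {x : MvPolynomial σ K} : renameEquiv K e x ∈ L.map (renameEquiv K e) ↔ x ∈ L := by
  rw [Ideal.mem_map_of_equiv]
  simp only [EmbeddingLike.apply_eq_iff_eq, exists_eq_right]

theorem vnum_map_renameEquiv (e : σ ≃ τ) (L p : Ideal (MvPolynomial σ K)) :
    vnum (L.map (renameEquiv K e)) (p.map (renameEquiv K e)) = vnum L p := by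
  unfold vnum
  congr 1
  ext d
  have key (f : MvPolynomial σ K) :
      (L.map (renameEquiv K e)).colon (Ideal.span {renameEquiv K e f}) =
        p.map (renameEquiv K e) ↔ L.colon (Ideal.span {f}) = p := by
    rw [colon_span_singleton_eq_iff, colon_span_singleton_eq_iff,
      (renameEquiv K e).surjective.forall]
    refine forall_congr' fun x => ?_
    rw [← map_mul, mem_map_renameEquiv_iff, mem_map_renameEquiv_iff]
  constructor
  · rintro ⟨f, hf, h⟩
    obtain ⟨f, rfl⟩ := (renameEquiv K e).surjective f
    exact ⟨f, (IsHomogeneous.rename_isHomogeneous_iff e.injective).1 hf, (key f).1 h⟩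
  · rintro ⟨f, hf, h⟩
    exact ⟨_, IsHomogeneous.rename_isHomogeneous hf, (key f).2 h⟩

theorem map_renameEquiv_map_rename {ρ : Type} (I : Ideal (MvPolynomial ρ K)) (i : ρ → σ)
    (e : σ ≃ τ) : (I.map (rename (R := K) i)).map (renameEquiv K e) =
      I.map (rename (R := K) (e ∘ i)) := by
  change Ideal.map (rename (R := K) e) (Ideal.map (rename (R := K) i) I) = _
  rw [Ideal.map_mapₐ, rename_comp_rename]

end MainProof

/-- Theorem 2.2: for nonzero proper graded ideals `I ⊂ R`, `J ⊂ T`,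
identified with their extensions to `S`, for every `k ≥ 1`:
(a) for every `p ∈ Ass(I^k)`, `v_p((IJ)^k) = v_p(I^k) + α(J)·k`, and
(b) for every `q ∈ Ass(J^k)`, `v_q((IJ)^k) = v_q(J^k) + α(I)·k`,
where associated primes and v-numbers are computed over `S`. -/
theorem stmt1 {K : Type} [Field K] {n m : ℕ}
    (I : Ideal (MvPolynomial (Fin n) K)) (J : Ideal (MvPolynomial (Fin m) K))
    (hInz : I ≠ ⊥) (hIpr : I ≠ ⊤) (hIgr : IsGradedIdeal I)
    (hJnz : J ≠ ⊥) (hJpr : J ≠ ⊤) (hJgr : IsGradedIdeal J)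
    (eI eJ : Ideal (MvPolynomial (Fin n ⊕ Fin m) K))
    (heI : eI = Ideal.map (rename Sum.inl) I)
    (heJ : eJ = Ideal.map (rename Sum.inr) J) :
    ∀ k : ℕ, 1 ≤ k →
      (∀ p ∈ assOf (eI ^ k),
        vnum ((eI * eJ) ^ k) p = vnum (eI ^ k) p + alphaDeg J * k) ∧
      (∀ q ∈ assOf (eJ ^ k),
        vnum ((eI * eJ) ^ k) q = vnum (eJ ^ k) q + alphaDeg I * k) := by
  subst heI heJ
  intro k _
  refine ⟨fun p hp => ?_, fun q hq => ?_⟩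
  · obtain ⟨hprime, hex⟩ := exists_colon_of_mem_assOf hp
    exact vnum_mul_pow_inl hInz hIgr hJnz hJgr k hex
  · obtain ⟨hprime, f, hf⟩ := exists_colon_of_mem_assOf hq
    set e := Equiv.sumComm (Fin n) (Fin m)
    have hI : (I.map (rename (R := K) Sum.inl)).map (renameEquiv K e) =
        I.map (rename (R := K) Sum.inr) := map_renameEquiv_map_rename _ _ _
    have hJ : (J.map (rename (R := K) Sum.inr)).map (renameEquiv K e) =
        J.map (rename (R := K) Sum.inl) := map_renameEquiv_map_rename _ _ _
    have : (q.map (renameEquiv K e)).IsPrime := Ideal.map_isPrime_of_equiv _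
    have key := vnum_mul_pow_inl (p := q.map (renameEquiv K e)) hJnz hJgr hInz hIgr k
      ⟨renameEquiv K e f, (renameEquiv K e).surjective.forall.2 fun x => by
        rw [← map_mul, ← hJ, ← Ideal.map_pow, mem_map_renameEquiv_iff, mem_map_renameEquiv_iff, hf]⟩
    rwa [← hI, ← hJ, ← Ideal.map_mul, ← Ideal.map_pow, ← Ideal.map_pow, vnum_map_renameEquiv,
      vnum_map_renameEquiv, mul_comm] at key
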